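/- arXiv:1709.01240 — 10 statements merged into one kernel-verified Lean document; each statement's English description precedes it below -/
import Mathlib

section
/- Let n ≥ 1. The set {(a,b) ∈ ℝ^n × ℝ^{n+1} : b_j ≥ 0 for all j, and 0 ≤ a_i ≤ b_1 + ⋯ + b_{n+1} for all i} is equal to the convex cone generated by the vectors (χ_A, e_j), where A ranges over all (possibly empty) subsets of {1,…,n} and j ranges over {1,…,n+1}. -/
/-!
Given `(a, b)` in the left-hand set, put `B = ∑ j, b j` and `t i = a i / B ∈ [0, 1]`. Include each
index `i` independently with probability `t i`: the random subset takes the value `A` with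
probability `w A = ∏_{i ∈ A} t i * ∏_{i ∉ A} (1 - t i)`. Total mass one (`sum_bernoulliWeight`) and
marginals `t i` (`sum_bernoulliWeight_mem`) say that `∑ A, w A • (1, χ_A) = (1, t)`. Hence the
coefficients `b j * w A` express `(a, b)` in terms of the generators `(χ_A, e_j)`, since
`a i = B * t i`. The reverse inclusion compares coefficients: the `a`-entry of a combination sums
only part of the nonnegative coefficients, and `∑ j, b j` sums all of them.
-/

/-- The convex cone generated by a finite family of vectors: the set of all
nonnegative real linear combinations of the family. -/
def coneGen {E : Type*} [AddCommMonoid E] [Module ℝ E] {ι : Type*} [Fintype ι]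
    (v : ι → E) : Set E :=
  {x | ∃ c : ι → ℝ, (∀ i, 0 ≤ c i) ∧ x = ∑ i, c i • v i}

/-- The probability of the subset `A` when each index `i` is included independently with
probability `t i`. -/
def bernoulliWeight {n : ℕ} (t : Fin n → ℝ) (A : Finset (Fin n)) : ℝ :=
  (∏ i ∈ A, t i) * ∏ i ∈ Finset.univ \ A, (1 - t i)

lemma bernoulliWeight_nonneg {n : ℕ} {t : Fin n → ℝ} (h0 : ∀ i, 0 ≤ t i) (h1 : ∀ i, t i ≤ 1)
    (A : Finset (Fin n)) : 0 ≤ bernoulliWeight t A :=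
  mul_nonneg (Finset.prod_nonneg fun i _ => h0 i)
    (Finset.prod_nonneg fun i _ => sub_nonneg.2 (h1 i))

lemma sum_bernoulliWeight {n : ℕ} (t : Fin n → ℝ) : ∑ A, bernoulliWeight t A = 1 := by
  have h := Finset.prod_add t (fun i => 1 - t i) Finset.univ
  simp only [add_sub_cancel, Finset.prod_const_one, Finset.powerset_univ] at h
  exact h.symm

/-- The marginals of the product distribution: replacing the factor `1 - t i` by `0` in the
expansion of `∏ k, (t k + (1 - t k))` keeps exactly the terms with `i ∈ A`. -/
lemma sum_bernoulliWeight_mem {n : ℕ} (t : Fin n → ℝ) (i : Fin n) :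
    ∑ A, bernoulliWeight t A * (if i ∈ A then 1 else 0) = t i := by
  have h := Finset.prod_add t (fun k => if k = i then 0 else 1 - t k) Finset.univ
  rw [Finset.powerset_univ] at h
  have hl : ∏ k, (t k + if k = i then 0 else 1 - t k) = t i := by
    rw [Finset.prod_eq_single i]
    · simp
    · intro k _ hk
      simp [hk]
    · simp
  rw [← hl, h]
  refine Finset.sum_congr rfl fun A _ => ?_
  by_cases hi : i ∈ A
  · rw [if_pos hi, mul_one, bernoulliWeight]
    congr 1
    refine Finset.prod_congr rfl fun k hk => ?_
    have hki : k ≠ i := by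
      rintro rfl
      simp [hi] at hk
    rw [if_neg hki]
  · have hz : ∏ k ∈ Finset.univ \ A, (if k = i then 0 else 1 - t k) = 0 :=
      Finset.prod_eq_zero (i := i) (by simp [hi]) (if_pos rfl)
    rw [if_neg hi, mul_zero, hz, mul_zero]

/-- The set `{(a,b) ∈ ℝ^n × ℝ^{n+1} : b_j ≥ 0 for all j, 0 ≤ a_i ≤ Σ_j b_j for all i}`
is the convex cone generated by the vectors `(χ_A, e_j)`, where `A` ranges over all
(possibly empty) subsets of `{1,…,n}` and `j` over `{1,…,n+1}`. -/
theorem stmt1 (n : ℕ) (hn : 1 ≤ n) :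
    {p : (Fin n → ℝ) × (Fin (n + 1) → ℝ) |
        (∀ j, 0 ≤ p.2 j) ∧ ∀ i, 0 ≤ p.1 i ∧ p.1 i ≤ ∑ j, p.2 j} =
      coneGen (fun q : Finset (Fin n) × Fin (n + 1) =>
        ((fun i => if i ∈ q.1 then (1 : ℝ) else 0),
          fun j => if j = q.2 then (1 : ℝ) else 0)) := by
  ext ⟨a, b⟩
  simp only [Set.mem_ofPred_eq, coneGen]
  constructor
  · rintro ⟨hb, ha⟩
    set B := ∑ j, b j with hB
    have hB0 : 0 ≤ B := Finset.sum_nonneg fun j _ => hb j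
    set t : Fin n → ℝ := fun i => a i / B with ht
    -- If `B = 0` then `a = 0`, so the convention `a i / 0 = 0` causes no harm here.
    have hat : ∀ i, B * t i = a i := by
      intro i
      rcases hB0.eq_or_lt with h | h
      · have := ha i
        rw [← h] at this ⊢
        rw [zero_mul]
        exact le_antisymm this.1 this.2
      · exact mul_div_cancel₀ _ h.ne'
    refine ⟨fun q => b q.2 * bernoulliWeight t q.1, fun q => mul_nonneg (hb _)
      (bernoulliWeight_nonneg (fun i => div_nonneg (ha i).1 hB0)
        (fun i => div_le_one_of_le₀ (ha i).2 hB0) _), ?_⟩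
    refine Prod.ext (funext fun i => ?_) (funext fun j => ?_)
    · simp only [Prod.fst_sum, Prod.smul_fst, Finset.sum_apply, Pi.smul_apply, smul_eq_mul]
      rw [Fintype.sum_prod_type_right, ← hat i, hB, Finset.sum_mul]
      refine Finset.sum_congr rfl fun j _ => ?_
      rw [← sum_bernoulliWeight_mem t i, Finset.mul_sum]
      simp only [mul_assoc]
    · simp only [Prod.snd_sum, Prod.smul_snd, Finset.sum_apply, Pi.smul_apply, smul_eq_mul]
      rw [Fintype.sum_prod_type]
      simp [← Finset.mul_sum, sum_bernoulliWeight]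
  · rintro ⟨c, hc, h⟩
    obtain ⟨h1, h2⟩ := Prod.ext_iff.1 h
    have ha : ∀ i, a i = ∑ q : Finset (Fin n) × Fin (n + 1), c q * if i ∈ q.1 then 1 else 0 := by
      intro i
      simpa [Prod.fst_sum, Finset.sum_apply] using congrFun h1 i
    have hb : ∀ j, b j = ∑ q : Finset (Fin n) × Fin (n + 1), c q * if j = q.2 then 1 else 0 := by
      intro j
      simpa [Prod.snd_sum, Finset.sum_apply] using congrFun h2 j
    have hs : ∑ j, b j = ∑ q, c q := by
      simp only [hb]
      rw [Finset.sum_comm]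
      simp
    refine ⟨fun j => ?_, fun i => ⟨?_, ?_⟩⟩
    · rw [hb]
      exact Finset.sum_nonneg fun q _ => mul_nonneg (hc q) (by split_ifs <;> norm_num)
    · rw [ha]
      exact Finset.sum_nonneg fun q _ => mul_nonneg (hc q) (by split_ifs <;> norm_num)
    · rw [hs, ha]
      exact Finset.sum_le_sum fun q _ =>
        mul_le_of_le_one_right (hc q) (by split_ifs <;> norm_num)
end

section
/- Let n ≥ 1, let σ_W = {(a,b) ∈ ℝ^n × ℝ^{n+1} : b_j ≥ 0 for all j, and 0 ≤ a_i ≤ b_1 + ⋯ + b_{n+1} for all i}, and let π : ℝ^n × ℝ^{n+1} → ℝ^{n+1} be the linear map π(a,b) = (b_1 + ⋯ + b_{n+1} − a_n, a_1 − a_n, a_2 − a_n, …, a_{n−1} − a_n, a_n). Then the image π(σ_W) equals the convex cone in ℝ × ℝ^{n−1} × ℝ = ℝ^{n+1} generated by the vectors (1, χ_A, 0) and (0, −χ_A, 1), where A ranges over all (possibly empty) subsets of {1,…,n−1}. -/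
open MeasureTheory in
/-- A point of the cube `[0, s]^m` is a combination of indicator vectors with nonnegative weights
of total `s`. The weights are those of the layer-cake formula: `A` is weighted by the length of
the set of levels `x ∈ (0, s]` whose superlevel set `{k | x ≤ u k}` is `A`. -/
lemma exists_cube_weights {m : ℕ} (s : ℝ) (hs : 0 ≤ s) (u : Fin m → ℝ)
    (hu : ∀ k, 0 ≤ u k ∧ u k ≤ s) :
    ∃ c : Finset (Fin m) → ℝ, (∀ A, 0 ≤ c A) ∧ ∑ A, c A = s ∧
      ∀ k, ∑ A, c A * (if k ∈ A then 1 else 0) = u k := by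
  classical
  let f : ℝ → Finset (Fin m) := fun x => Finset.univ.filter (fun k => x ≤ u k)
  let μ : Measure ℝ := volume.restrict (Set.Ioc 0 s)
  have hf : ∀ A, MeasurableSet (f ⁻¹' {A}) := by
    intro A
    have : f ⁻¹' {A} = ⋂ k, {x | x ≤ u k ↔ k ∈ A} := by
      ext x
      simp [f, Finset.ext_iff]
    rw [this]
    refine MeasurableSet.iInter fun k => ?_
    by_cases hk : k ∈ A
    · simp only [hk, iff_true]
      exact measurableSet_Iic
    · simp only [hk, iff_false, not_le]
      exact measurableSet_Ioi
  have key : ∀ S : Finset (Finset (Fin m)),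
      ∑ A ∈ S, μ.real (f ⁻¹' {A}) = μ.real (f ⁻¹' ↑S) := fun S =>
    sum_measureReal_preimage_singleton S (fun A _ => hf A)
  refine ⟨fun A => μ.real (f ⁻¹' {A}), fun A => measureReal_nonneg, ?_, fun k => ?_⟩
  · rw [key]
    simp [μ, hs]
  · have h1 : f ⁻¹' ↑(Finset.univ.filter (fun A : Finset (Fin m) => k ∈ A)) = Set.Iic (u k) := by
      ext x
      simp [f]
    have h2 : Set.Iic (u k) ∩ Set.Ioc 0 s = Set.Ioc 0 (u k) := by
      ext x
      simp only [Set.mem_inter_iff, Set.mem_Iic, Set.mem_Ioc]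
      constructor
      · rintro ⟨a, b, -⟩
        exact ⟨b, a⟩
      · rintro ⟨a, b⟩
        exact ⟨b, a, b.trans (hu k).2⟩
    simp only [mul_ite, mul_one, mul_zero]
    rw [← Finset.sum_filter, key, h1, measureReal_restrict_apply measurableSet_Iic, h2]
    simp [(hu k).1]

/-- Facet description of the cone generated by the vectors `(1, χ_A, 0)` and `(0, -χ_A, 1)`. -/
lemma mem_coneGen_iff {m : ℕ} (s : ℝ) (d : Fin m → ℝ) (t : ℝ) :
    ((s, d, t) : ℝ × (Fin m → ℝ) × ℝ) ∈
      coneGen (fun q : Finset (Fin m) × Bool =>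
        if q.2 then
          (((1 : ℝ), fun k => if k ∈ q.1 then (1 : ℝ) else 0, (0 : ℝ)) :
            ℝ × (Fin m → ℝ) × ℝ)
        else ((0 : ℝ), fun k => if k ∈ q.1 then (-1 : ℝ) else 0, (1 : ℝ))) ↔
      0 ≤ s ∧ 0 ≤ t ∧ ∀ k, -t ≤ d k ∧ d k ≤ s := by
  have expand : ∀ c : Finset (Fin m) × Bool → ℝ,
      (((s, d, t) : ℝ × (Fin m → ℝ) × ℝ) = ∑ q, c q • (if q.2 then
          (((1 : ℝ), fun k => if k ∈ q.1 then (1 : ℝ) else 0, (0 : ℝ)) :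
            ℝ × (Fin m → ℝ) × ℝ)
        else ((0 : ℝ), fun k => if k ∈ q.1 then (-1 : ℝ) else 0, (1 : ℝ)))) ↔
      s = ∑ A, c (A, true) ∧
      (∀ k, d k = ∑ A, c (A, true) * (if k ∈ A then 1 else 0) -
        ∑ A, c (A, false) * (if k ∈ A then 1 else 0)) ∧
      t = ∑ A, c (A, false) := by
    intro c
    rw [Fintype.sum_prod_type]
    have neg_ite : ∀ (A : Finset (Fin m)) (k : Fin m) (r : ℝ),
        (-if k ∈ A then r else 0) = if k ∈ A then -r else 0 := by
      intro A k r
      split_ifs <;> simp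
    simp [Prod.ext_iff, funext_iff, Prod.fst_sum, Prod.snd_sum, Finset.sum_add_distrib,
      Finset.sum_apply, sub_eq_add_neg, ← Finset.sum_neg_distrib, neg_ite]
  simp only [coneGen, Set.mem_ofPred_eq, expand]
  have bound : ∀ c : Finset (Fin m) → ℝ, (∀ A, 0 ≤ c A) → ∀ k,
      0 ≤ ∑ A, c A * (if k ∈ A then 1 else 0) ∧
      ∑ A, c A * (if k ∈ A then 1 else 0) ≤ ∑ A, c A := by
    intro c hc k
    refine ⟨Finset.sum_nonneg fun A _ => ?_, Finset.sum_le_sum fun A _ => ?_⟩ <;>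
      split_ifs <;> simp [hc A]
  constructor
  · rintro ⟨c, hc, rfl, hd, rfl⟩
    refine ⟨Finset.sum_nonneg fun A _ => hc _, Finset.sum_nonneg fun A _ => hc _, fun k => ?_⟩
    have h1 := bound (fun A => c (A, true)) (fun A => hc _) k
    have h2 := bound (fun A => c (A, false)) (fun A => hc _) k
    have h3 := hd k
    constructor <;> linarith
  · rintro ⟨hs, ht, hd⟩
    obtain ⟨c₁, h₁, e₁, f₁⟩ := exists_cube_weights s hs (fun k => max (d k) 0)
      (fun k => ⟨le_max_right _ _, max_le (hd k).2 hs⟩)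
    obtain ⟨c₂, h₂, e₂, f₂⟩ := exists_cube_weights t ht (fun k => max (-d k) 0)
      (fun k => ⟨le_max_right _ _, max_le (by linarith [(hd k).1]) ht⟩)
    refine ⟨fun q => if q.2 then c₁ q.1 else c₂ q.1, fun q => ?_, ?_, fun k => ?_, ?_⟩
    · dsimp only
      split_ifs
      · exact h₁ _
      · exact h₂ _
    · simpa using e₁.symm
    · have e : d k = max (d k) 0 - max (-d k) 0 := by
        rcases le_total (d k) 0 with h | h
        · rw [max_eq_right h, max_eq_left (by linarith)]; ring
        · rw [max_eq_left h, max_eq_right (by linarith)]; ring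
      simp only [if_true, Bool.false_eq_true, if_false, f₁, f₂]
      exact e
    · simpa using e₂.symm

/-- The image of the cone
`σ_W = {(a,b) : b_j ≥ 0 for all j, 0 ≤ a_i ≤ Σ_j b_j for all i}` under the linear map
`π(a,b) = (Σ_j b_j − a_n, a_1 − a_n, …, a_{n−1} − a_n, a_n)` equals the convex cone in
`ℝ × ℝ^{n−1} × ℝ` generated by the vectors `(1, χ_A, 0)` and `(0, −χ_A, 1)`, where `A`
ranges over all (possibly empty) subsets of `{1,…,n−1}`. -/
theorem stmt2 (n : ℕ) (hn : 1 ≤ n) :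
    (fun p : (Fin n → ℝ) × (Fin (n + 1) → ℝ) =>
        (((∑ j, p.2 j) - p.1 ⟨n - 1, by omega⟩,
          fun k : Fin (n - 1) => p.1 (Fin.castLE (by omega) k) - p.1 ⟨n - 1, by omega⟩,
          p.1 ⟨n - 1, by omega⟩) : ℝ × (Fin (n - 1) → ℝ) × ℝ)) ''
      {p : (Fin n → ℝ) × (Fin (n + 1) → ℝ) |
        (∀ j, 0 ≤ p.2 j) ∧ ∀ i, 0 ≤ p.1 i ∧ p.1 i ≤ ∑ j, p.2 j} =
    coneGen (fun q : Finset (Fin (n - 1)) × Bool =>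
      if q.2 then
        (((1 : ℝ), fun k => if k ∈ q.1 then (1 : ℝ) else 0, (0 : ℝ)) :
          ℝ × (Fin (n - 1) → ℝ) × ℝ)
      else ((0 : ℝ), fun k => if k ∈ q.1 then (-1 : ℝ) else 0, (1 : ℝ))) := by
  ext ⟨s, d, t⟩
  rw [mem_coneGen_iff]
  constructor
  · rintro ⟨⟨a, b⟩, ⟨-, ha⟩, h⟩
    simp only [Prod.mk.injEq] at h
    obtain ⟨rfl, rfl, rfl⟩ := h
    have h0 := ha ⟨n - 1, by omega⟩
    refine ⟨by linarith, h0.1, fun k => ?_⟩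
    have hk := ha (Fin.castLE (by omega) k)
    constructor <;> linarith
  · rintro ⟨hs, ht, hd⟩
    -- Only `∑ b_j` matters, so all of `s + t` is put on one coordinate of `b`.
    refine ⟨(fun i => if h : i.val < n - 1 then d ⟨i, h⟩ + t else t,
      Pi.single 0 (s + t)), ⟨fun j => ?_, fun i => ?_⟩, ?_⟩
    · have h : (0 : Fin (n + 1) → ℝ) ≤ Pi.single 0 (s + t) :=
        Pi.single_nonneg.2 (add_nonneg hs ht)
      exact h j
    · simp only [Finset.sum_pi_single']
      simp only [Finset.mem_univ, if_true]
      split_ifs with h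
      · have := hd ⟨i, h⟩
        constructor <;> linarith
      · constructor <;> linarith
    · simp
end

section
/- Let n ≥ 1. The convex cone in ℝ × ℝ^{n−1} × ℝ = ℝ^{n+1} generated by the vectors (1, χ_A, 0) and (0, −χ_A, 1), where A ranges over all (possibly empty) subsets of {1,…,n−1}, equals the set {(x, y, z) ∈ ℝ × ℝ^{n−1} × ℝ : x ≥ 0, z ≥ 0, and −z ≤ y_i ≤ x for all i = 1,…,n−1}. -/
/-- Every point `y` of the cube `[0, x]^ι` is a nonnegative combination of the vertices `χ_A`
with total weight `x`. -/
theorem exists_cube_weights_s3 {ι : Type*} [Fintype ι] [DecidableEq ι] (x : ℝ) (y : ι → ℝ)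
    (hx : 0 ≤ x) (h0 : ∀ i, 0 ≤ y i) (h1 : ∀ i, y i ≤ x) :
    ∃ c : Finset ι → ℝ, (∀ A, 0 ≤ c A) ∧ ∑ A, c A = x ∧
      ∀ k, ∑ A, c A * (if k ∈ A then 1 else 0) = y k := by
  -- When `x = 0`, the junk value `y i / 0 = 0` is still a legitimate probability.
  set p : ι → ℝ := fun i => y i / x with hp
  have hp0 : ∀ i, 0 ≤ p i := fun i => div_nonneg (h0 i) hx
  have hp1 : ∀ i, p i ≤ 1 := fun i => div_le_one_of_le₀ (h1 i) hx
  have hxp : ∀ i, x * p i = y i := by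
    intro i
    rcases hx.eq_or_lt with rfl | hx'
    · simp [le_antisymm (h1 i) (h0 i)]
    · exact mul_div_cancel₀ (y i) hx'.ne'
  have expand : ∀ g : ι → ℝ, ∑ A : Finset ι, (∏ i ∈ A, p i) * ∏ i ∈ Finset.univ \ A, g i =
      ∏ i, (p i + g i) := by
    intro g
    rw [Finset.prod_add, Finset.powerset_univ]
  refine ⟨fun A => x * ((∏ i ∈ A, p i) * ∏ i ∈ Finset.univ \ A, (1 - p i)), ?_, ?_, ?_⟩
  · intro A
    exact mul_nonneg hx (mul_nonneg (Finset.prod_nonneg fun i _ => hp0 i)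
      (Finset.prod_nonneg fun i _ => sub_nonneg.2 (hp1 i)))
  · rw [← Finset.mul_sum, expand]
    simp
  · intro k
    -- Setting the `k`-th complementary factor to zero kills exactly the subsets omitting `k`.
    have key : ∀ A : Finset ι,
        x * ((∏ i ∈ A, p i) * ∏ i ∈ Finset.univ \ A, (1 - p i)) * (if k ∈ A then 1 else 0) =
        x * ((∏ i ∈ A, p i) * ∏ i ∈ Finset.univ \ A, (if i = k then 0 else 1 - p i)) := by
      intro A
      by_cases hk : k ∈ A
      · rw [if_pos hk, mul_one]
        congr 2
        refine Finset.prod_congr rfl fun i hi => ?_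
        rw [if_neg]
        rintro rfl
        exact (Finset.mem_sdiff.1 hi).2 hk
      · have hzero : ∏ i ∈ Finset.univ \ A, (if i = k then 0 else 1 - p i) = 0 :=
          Finset.prod_eq_zero (by simp [hk] : k ∈ Finset.univ \ A) (if_pos rfl)
        rw [if_neg hk, hzero, mul_zero, mul_zero, mul_zero]
    rw [Finset.sum_congr rfl fun A _ => key A, ← Finset.mul_sum, expand,
      Finset.prod_eq_single k (fun i _ hi => by simp [hi]) (by simp)]
    simpa using hxp k

/-- The convex cone in `ℝ × ℝ^{n−1} × ℝ` generated by the vectors `(1, χ_A, 0)` and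
`(0, −χ_A, 1)`, where `A` ranges over all (possibly empty) subsets of `{1,…,n−1}`,
equals `{(x,y,z) : x ≥ 0, z ≥ 0, −z ≤ y_i ≤ x for all i}`. -/
theorem stmt3 (n : ℕ) (hn : 1 ≤ n) :
    coneGen (fun q : Finset (Fin (n - 1)) × Bool =>
      if q.2 then
        (((1 : ℝ), fun k => if k ∈ q.1 then (1 : ℝ) else 0, (0 : ℝ)) :
          ℝ × (Fin (n - 1) → ℝ) × ℝ)
      else ((0 : ℝ), fun k => if k ∈ q.1 then (-1 : ℝ) else 0, (1 : ℝ))) =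
    {p : ℝ × (Fin (n - 1) → ℝ) × ℝ |
      0 ≤ p.1 ∧ 0 ≤ p.2.2 ∧ ∀ i, -p.2.2 ≤ p.2.1 i ∧ p.2.1 i ≤ p.1} := by
  ext ⟨x, y, z⟩
  simp only [coneGen, Set.mem_ofPred_eq]
  constructor
  · rintro ⟨c, hc, h⟩
    rw [Fintype.sum_prod_type] at h
    simp only [Fintype.sum_bool, if_true, Bool.false_eq_true, if_false, Prod.ext_iff,
      Prod.fst_sum, Prod.snd_sum, Prod.fst_add, Prod.snd_add, Prod.smul_fst, Prod.smul_snd,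
      smul_eq_mul, mul_one, mul_zero, add_zero, zero_add] at h
    obtain ⟨rfl, rfl, rfl⟩ := h
    refine ⟨Finset.sum_nonneg fun _ _ => hc _, Finset.sum_nonneg fun _ _ => hc _, fun i => ?_⟩
    simp only [Finset.sum_apply, Pi.add_apply, Pi.smul_apply, smul_eq_mul]
    rw [← Finset.sum_neg_distrib]
    constructor <;> refine Finset.sum_le_sum fun A _ => ?_ <;>
      have ht := hc (A, true) <;> have hf := hc (A, false) <;> split_ifs <;> linarith
  · rintro ⟨hx, hz, hy⟩
    obtain ⟨a, ha, hax, hay⟩ := exists_cube_weights_s3 x (fun i => max (y i) 0) hx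
      (fun i => le_max_right _ _) (fun i => max_le (hy i).2 hx)
    obtain ⟨b, hb, hbz, hby⟩ := exists_cube_weights_s3 z (fun i => max (-y i) 0) hz
      (fun i => le_max_right _ _) (fun i => max_le (by linarith [(hy i).1]) hz)
    refine ⟨fun q => if q.2 then a q.1 else b q.1, ?_, ?_⟩
    · rintro ⟨A, _ | _⟩
      · exact hb A
      · exact ha A
    · rw [Fintype.sum_prod_type]
      simp only [Fintype.sum_bool, if_true, Bool.false_eq_true, if_false, Prod.ext_iff,
        Prod.fst_sum, Prod.snd_sum, Prod.fst_add, Prod.snd_add, Prod.smul_fst, Prod.smul_snd,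
        smul_eq_mul, mul_one, mul_zero, add_zero, zero_add]
      refine ⟨hax.symm, ?_, hbz.symm⟩
      funext k
      have hsplit : y k = max (y k) 0 - max (-y k) 0 := by
        rcases le_total 0 (y k) with h | h
        · rw [max_eq_left h, max_eq_right (by linarith)]; ring
        · rw [max_eq_right h, max_eq_left (by linarith)]; ring
      rw [hsplit, ← hay k, ← hby k, ← Finset.sum_sub_distrib]
      simp only [Finset.sum_apply, Pi.add_apply, Pi.smul_apply, smul_eq_mul]
      refine Finset.sum_congr rfl fun A _ => ?_
      split_ifs <;> ring
end

section
/- Let n ≥ 1 and i ∈ {1,…,n}. Let w_i ∈ ℝ^n be the vector whose first i−1 entries equal 1, whose i-th entry equals (n−i+1)/(n+1), and whose remaining entries equal 0. Then the intersection of the unit hypercube [0,1]^n with the hyperplane {x ∈ ℝ^n : x_1 + ⋯ + x_n = in/(n+1)} equals the convex hull of the set of all vectors obtained from w_i by permuting its coordinates, i.e. of {(w_i)_{σ(1)}, …, (w_i)_{σ(n)}) : σ ∈ 𝔖_n}. -/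
/-! The slice is compact and convex, so by Krein–Milman it is the closed convex hull of its extreme
points. If a point of the slice has two coordinates strictly between `0` and `1`, mass can be moved
from one to the other in both directions, so the point is not extreme (`eq_of_fractional`). Hence
an extreme point has at most one fractional coordinate, its other coordinates being `0` or `1`.
The coordinate sum is `i + c` with `c = (n - i) / (n + 1)` strictly between `0` and `1`, so there
are exactly `i` ones and one coordinate equal to `c`: the point is a permutation of `w_i`
(`extreme_mem_range`). Finitely many points have a closed convex hull, which removes the closure.
-/

/-- The section of the unit cube by the hyperplane on which the coordinates sum to `s`. -/
def cubeSlice (n : ℕ) (s : ℝ) : Set (Fin n → ℝ) :=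
  {x | (∀ k, x k ∈ Set.Icc (0 : ℝ) 1) ∧ ∑ k, x k = s}

/-- The vector with `i` ones, then `c`, then zeros, with coordinates permuted by `σ`. -/
def permVec (n : ℕ) (i : Fin n) (c : ℝ) (σ : Equiv.Perm (Fin n)) : Fin n → ℝ :=
  fun k => if ((σ k : Fin n) : ℕ) < (i : ℕ) then (1 : ℝ) else if σ k = i then c else 0

theorem convex_cubeSlice (n : ℕ) (s : ℝ) : Convex ℝ (cubeSlice n s) := by
  rintro x ⟨hx, hxs⟩ y ⟨hy, hys⟩ a b ha hb hab
  refine ⟨fun k => convex_Icc (0 : ℝ) 1 (hx k) (hy k) ha hb hab, ?_⟩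
  simp only [Pi.add_apply, Pi.smul_apply, smul_eq_mul, Finset.sum_add_distrib, ← Finset.mul_sum,
    hxs, hys]
  rw [← add_mul, hab, one_mul]

theorem isCompact_cubeSlice (n : ℕ) (s : ℝ) : IsCompact (cubeSlice n s) := by
  have h1 : IsCompact (Set.univ.pi fun _ : Fin n => Set.Icc (0 : ℝ) 1) :=
    isCompact_univ_pi fun _ => isCompact_Icc
  have h2 : IsClosed {x : Fin n → ℝ | ∑ k, x k = s} :=
    isClosed_eq (by fun_prop) continuous_const
  convert h1.inter_right h2 using 1
  ext x
  simp only [cubeSlice, Set.mem_ofPred_eq, Set.mem_inter_iff, Set.mem_univ_pi]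

theorem permVec_mem (n : ℕ) (i : Fin n) (c : ℝ) (hc0 : 0 < c) (hc1 : c < 1)
    (σ : Equiv.Perm (Fin n)) : permVec n i c σ ∈ cubeSlice n ((i : ℕ) + c) := by
  refine ⟨fun k => ?_, ?_⟩
  · unfold permVec
    split_ifs <;> constructor <;> linarith
  · unfold permVec
    rw [Equiv.sum_comp σ fun k : Fin n => if (k : ℕ) < (i : ℕ) then (1 : ℝ)
      else if k = i then c else 0]
    have h : ∀ k : Fin n, (if (k : ℕ) < (i : ℕ) then (1 : ℝ) else if k = i then c else 0)
        = (if k < i then 1 else 0) + if k = i then c else 0 := by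
      intro k
      by_cases h1 : k < i
      · simp [h1, h1.ne]
      · simp [h1]
    simp only [h, Finset.sum_add_distrib, Finset.sum_ite_eq', Finset.mem_univ, if_true,
      Finset.sum_boole]
    rw [Finset.filter_gt_eq_Iio, Fin.card_Iio]

/-- An extreme point of a slice has at most one coordinate strictly between `0` and `1`. -/
theorem eq_of_fractional {n : ℕ} {s : ℝ} {x : Fin n → ℝ}
    (hx : x ∈ (cubeSlice n s).extremePoints ℝ) {j k : Fin n}
    (hj : x j ∈ Set.Ioo (0 : ℝ) 1) (hk : x k ∈ Set.Ioo (0 : ℝ) 1) : j = k := by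
  by_contra hjk
  obtain ⟨⟨hx1, hx2⟩, hext⟩ := mem_extremePoints_iff_left.1 hx
  obtain ⟨hj0, hj1⟩ := hj
  obtain ⟨hk0, hk1⟩ := hk
  obtain ⟨e, he, hlt⟩ := exists_between
    (show (0 : ℝ) < min (min (x j) (1 - x j)) (min (x k) (1 - x k)) by
      simp only [lt_min_iff]; refine ⟨⟨?_, ?_⟩, ?_, ?_⟩ <;> linarith)
  simp only [lt_min_iff] at hlt
  obtain ⟨⟨h1, h2⟩, h3, h4⟩ := hlt
  have key : ∀ t : ℝ, |t| ≤ e → x + (Pi.single j t - Pi.single k t) ∈ cubeSlice n s := by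
    intro t ht
    obtain ⟨ht1, ht2⟩ := abs_le.1 ht
    refine ⟨fun l => ?_, ?_⟩
    · simp only [Pi.add_apply, Pi.sub_apply, Pi.single_apply, Set.mem_Icc]
      have := hx1 l
      by_cases hl : l = j
      · subst hl
        simp only [hjk, if_true, if_false]
        constructor <;> linarith
      · by_cases hl' : l = k
        · subst hl'
          simp only [hl, if_true, if_false]
          constructor <;> linarith
        · simpa [hl, hl'] using this
    · simp [Finset.sum_add_distrib, hx2]
  have h := hext _ (key e (abs_of_pos he).le) _ (key (-e) (by rw [abs_neg, abs_of_pos he]))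
    ⟨1 / 2, 1 / 2, by norm_num, by norm_num, by norm_num, by
      ext l
      simp only [Pi.add_apply, Pi.sub_apply, Pi.smul_apply, smul_eq_mul, Pi.single_neg,
        Pi.neg_apply]
      ring⟩
  have hcoord := congrFun h j
  simp [hjk] at hcoord
  exact he.ne' hcoord

/-- With a fractional coordinate sum `i + c`, every extreme point is a permutation of `w_i`. -/
theorem extreme_mem_range {n : ℕ} (i : Fin n) (c : ℝ) (hc0 : 0 < c) (hc1 : c < 1)
    {x : Fin n → ℝ} (hx : x ∈ (cubeSlice n ((i : ℕ) + c)).extremePoints ℝ) :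
    x ∈ Set.range (permVec n i c) := by
  classical
  obtain ⟨hx1, hx2⟩ := extremePoints_subset hx
  have h01 : ∀ k, x k ∉ Set.Ioo (0 : ℝ) 1 → x k = if x k = 1 then 1 else 0 := by
    intro k hk
    split_ifs with h
    · exact h
    · by_contra h0
      exact hk ⟨(hx1 k).1.lt_of_ne' h0, (hx1 k).2.lt_of_ne h⟩
  have hcard : ∑ k, (if x k = 1 then (1 : ℝ) else 0)
      = ((Finset.univ.filter fun k => x k = 1).card : ℝ) := by
    rw [Finset.sum_boole]
  set m := (Finset.univ.filter fun k => x k = 1).card with hm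
  obtain ⟨j, hj⟩ : ∃ j, x j ∈ Set.Ioo (0 : ℝ) 1 := by
    -- otherwise the coordinate sum would be an integer
    by_contra! h
    rw [Finset.sum_congr rfl fun k _ => h01 k (h k), hcard] at hx2
    have a1 : (i : ℕ) < m := by
      have : ((i : ℕ) : ℝ) < m := by linarith
      exact_mod_cast this
    have a2 : m < (i : ℕ) + 1 := by
      have : (m : ℝ) < (i : ℕ) + 1 := by linarith
      exact_mod_cast this
    omega
  have hj1 : x j ≠ 1 := hj.2.ne
  have hsum : (m : ℝ) + x j = (i : ℕ) + c := by
    rw [← hx2, ← hcard]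
    have : ∀ k, x k = (if x k = 1 then 1 else 0) + if k = j then x j else 0 := by
      intro k
      by_cases hk : k = j
      · subst hk; simp [hj1]
      · simpa [hk] using h01 k fun h => hk (eq_of_fractional hx h hj)
    conv_rhs => rw [Finset.sum_congr rfl fun k _ => this k]
    simp [Finset.sum_add_distrib]
  obtain ⟨hj0, hjlt⟩ := hj
  have hmi : m = i := by
    have a1 : (i : ℕ) < m + 1 := by
      have : ((i : ℕ) : ℝ) < m + 1 := by linarith
      exact_mod_cast this
    have a2 : m < (i : ℕ) + 1 := by
      have : (m : ℝ) < (i : ℕ) + 1 := by linarith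
      exact_mod_cast this
    omega
  have hxj : x j = c := by rw [hmi] at hsum; linarith
  have hcards : Fintype.card {k // x k = 1} = Fintype.card {k : Fin n // k < i} := by
    rw [Fintype.card_subtype, Fintype.card_subtype, Finset.filter_gt_eq_Iio, Fin.card_Iio]
    exact hmi
  let e := Fintype.equivOfCardEq hcards
  let τ : Equiv.Perm (Fin n) := e.extendSubtype
  have hτ1 : ∀ k, x k = 1 → τ k < i := fun k hk => e.extendSubtype_mem k hk
  have hτ2 : ∀ k, x k ≠ 1 → ¬ τ k < i := fun k hk => e.extendSubtype_not_mem k hk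
  -- `τ` sends the ones below `i`; the swap fixes these and then sends `j` to `i`
  refine ⟨τ.trans (Equiv.swap (τ j) i), funext fun k => ?_⟩
  change (if ((Equiv.swap (τ j) i (τ k) : Fin n) : ℕ) < (i : ℕ) then (1 : ℝ)
    else if Equiv.swap (τ j) i (τ k) = i then c else 0) = x k
  by_cases hk1 : x k = 1
  · have hlt := hτ1 k hk1
    have hne : τ k ≠ τ j := fun h => hτ2 j hj1 (h ▸ hlt)
    rw [Equiv.swap_apply_of_ne_of_ne hne hlt.ne, if_pos (Fin.lt_def.1 hlt), hk1]
  · by_cases hkj : k = j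
    · subst hkj
      simp [hxj]
    · have hk0 : x k = 0 := by
        simpa [hk1] using h01 k fun h => hkj (eq_of_fractional hx h ⟨hj0, hjlt⟩)
      have hne : τ k ≠ τ j := fun h => hkj (τ.injective h)
      have hi : Equiv.swap (τ j) i (τ k) ≠ i := by
        intro h
        rw [Equiv.swap_apply_eq_iff, Equiv.swap_apply_right] at h
        exact hne h
      have hge : ¬ Equiv.swap (τ j) i (τ k) < i := by
        rw [Equiv.swap_apply_def, if_neg hne]
        split_ifs
        · exact hτ2 j hj1
        · exact hτ2 k hk1
      rw [if_neg (fun h => hge (Fin.lt_def.2 h)), if_neg hi, hk0]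

theorem cubeSlice_eq_convexHull {n : ℕ} (i : Fin n) (c : ℝ) (hc0 : 0 < c) (hc1 : c < 1) :
    cubeSlice n ((i : ℕ) + c) = convexHull ℝ (Set.range (permVec n i c)) := by
  apply Set.Subset.antisymm
  · rw [← closure_convexHull_extremePoints (isCompact_cubeSlice n _) (convex_cubeSlice n _)]
    refine closure_minimal (convexHull_mono fun x hx => extreme_mem_range i c hc0 hc1 hx) ?_
    exact (Set.finite_range _).isClosed_convexHull ℝ
  · refine convexHull_min ?_ (convex_cubeSlice n _)
    rintro _ ⟨σ, rfl⟩
    exact permVec_mem n i c hc0 hc1 σ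

/-- The hyperplane slice `[0,1]^n ∩ {Σ x_k = i·n/(n+1)}` of the unit hypercube is the
convex hull of the set of coordinate permutations of the vector `w_i` whose first
`i − 1` entries are `1`, whose `i`-th entry is `(n−i+1)/(n+1)`, and whose remaining
entries are `0`.  (Here `i : Fin n` encodes the index `i+1 ∈ {1,…,n}` of the paper.) -/
theorem stmt4 (n : ℕ) (hn : 1 ≤ n) (i : Fin n) :
    {x : Fin n → ℝ | (∀ k, x k ∈ Set.Icc (0 : ℝ) 1) ∧
        ∑ k, x k = (((i : ℕ) : ℝ) + 1) * n / (n + 1)} =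
      convexHull ℝ (Set.range fun σ : Equiv.Perm (Fin n) =>
        fun k : Fin n =>
          if ((σ k : Fin n) : ℕ) < (i : ℕ) then (1 : ℝ)
          else if σ k = i then ((n : ℝ) - ((i : ℕ) : ℝ)) / ((n : ℝ) + 1)
          else 0) := by
  have hi : ((i : ℕ) : ℝ) < n := by exact_mod_cast i.isLt
  have hi0 : (0 : ℝ) ≤ (i : ℕ) := Nat.cast_nonneg _
  have hn1 : (0 : ℝ) < n + 1 := by positivity
  have h := cubeSlice_eq_convexHull i (((n : ℝ) - ((i : ℕ) : ℝ)) / ((n : ℝ) + 1))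
    (div_pos (by linarith) hn1) ((div_lt_one hn1).2 (by linarith))
  have hs : (((i : ℕ) : ℝ) + 1) * n / (n + 1)
      = (i : ℕ) + ((n : ℝ) - ((i : ℕ) : ℝ)) / ((n : ℝ) + 1) := by
    field_simp
    ring
  rw [hs]
  exact h
end

section
/- Let n ≥ 1. For i = 1,…,n set R_i = {x ∈ [0,1]^n : x_1 + ⋯ + x_n = in/(n+1)}, and let z ∈ ℝ^n be the vector with entries z_i = (n² + n − 1 − (i−1)(n+2))/(n+1). Then the Minkowski sum R_1 + R_2 + ⋯ + R_n = {c_1 + ⋯ + c_n : c_i ∈ R_i} equals the convex hull of the set of all vectors obtained from z by permuting its coordinates, i.e. of {(z_{σ(1)}, …, z_{σ(n)}) : σ ∈ 𝔖_n}. -/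
/-!
For each `i`, the slice `R_i` of the cube has as vertices the coordinate permutations of a single
"threshold" vector `v_i = (1, …, 1, f, 0, …, 0)`, whose fractional entry `f` sits at position `i`.
The sum of the `v_i` is `z`. Hence each `z ∘ σ = ∑ v_i ∘ σ` is in the Minkowski sum, which is
convex, so the hull is contained in it.

Conversely, a point `x = ∑ c_i` outside the (closed) hull would be strictly separated from it by a
linear functional with weights `w`. If `σ` ranks the coordinates by decreasing weight, then
`v_i ∘ σ` maximizes the functional on `R_i` simultaneously for all `i` (`slice_le`), because
filling the coordinates of largest weight first is optimal. Summing over `i`, the functional is at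
least as large at `z ∘ σ` as at `x`, a contradiction.
-/

/-- The vertex of the slice `∑ x_k = (i + 1) n / (n + 1)` of the cube whose entries are decreasing:
ones before position `i` (counted from `0`), a fractional entry at `i`, zeros afterwards. -/
noncomputable def sliceVertex {n : ℕ} (i k : Fin n) : ℝ :=
  (if k < i then 1 else 0) + (if k = i then 1 - ((i : ℕ) + 1 : ℝ) / (n + 1) else 0)

lemma sliceVertex_of_lt {n : ℕ} {i k : Fin n} (h : k < i) : sliceVertex i k = 1 := by
  simp [sliceVertex, h, h.ne]

lemma sliceVertex_of_gt {n : ℕ} {i k : Fin n} (h : i < k) : sliceVertex i k = 0 := by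
  simp [sliceVertex, h.not_gt, h.ne']

lemma sliceVertex_mem {n : ℕ} (i k : Fin n) : sliceVertex i k ∈ Set.Icc (0 : ℝ) 1 := by
  rcases lt_trichotomy k i with h | rfl | h
  · simp [sliceVertex_of_lt h]
  · have hk : ((k : ℕ) : ℝ) + 1 ≤ n := by exact_mod_cast k.2
    have h1 : (((k : ℕ) : ℝ) + 1) / (n + 1) ≤ 1 := by
      rw [div_le_one (by positivity)]; linarith
    have h0 : 0 ≤ (((k : ℕ) : ℝ) + 1) / (n + 1) := by positivity
    simp only [sliceVertex, lt_irrefl, if_false, if_true, zero_add]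
    constructor <;> linarith
  · simp [sliceVertex_of_gt h]

lemma sum_sliceVertex {n : ℕ} (i : Fin n) :
    ∑ k, sliceVertex i k = (((i : ℕ) : ℝ) + 1) * n / (n + 1) := by
  have hn : (n : ℝ) + 1 ≠ 0 := by positivity
  simp only [sliceVertex, Finset.sum_add_distrib, Finset.sum_boole, Finset.sum_ite_eq',
    Finset.mem_univ, if_true, Finset.filter_gt_eq_Iio, Fin.card_Iio]
  field_simp
  ring

/-- The vertices `v_i` add up to `z`. -/
lemma sum_sliceVertex_left {n : ℕ} (k : Fin n) :
    ∑ i, sliceVertex i k =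
      ((n : ℝ) ^ 2 + (n : ℝ) - 1 - ((k : ℕ) : ℝ) * ((n : ℝ) + 2)) / ((n : ℝ) + 1) := by
  have hn : (n : ℝ) + 1 ≠ 0 := by positivity
  have hk : 1 + (k : ℕ) ≤ n := by have := k.2; omega
  simp only [sliceVertex, Finset.sum_add_distrib, Finset.sum_boole, Finset.sum_ite_eq,
    Finset.mem_univ, if_true, Finset.filter_lt_eq_Ioi, Fin.card_Ioi, Nat.sub_sub]
  push_cast [Nat.cast_sub hk]
  field_simp
  ring

/-- If `τ` lists the coordinates by decreasing weight, then the vertex that fills the coordinates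
in this order maximizes the weighted sum over the slice. -/
lemma slice_le {n : ℕ} (w c : Fin n → ℝ) (τ : Equiv.Perm (Fin n)) (hτ : Antitone (w ∘ τ))
    (i : Fin n) (hc : ∀ k, c k ∈ Set.Icc (0 : ℝ) 1)
    (hs : ∑ k, c k = (((i : ℕ) : ℝ) + 1) * n / (n + 1)) :
    ∑ k, c k * w k ≤ ∑ k, sliceVertex i (τ.symm k) * w k := by
  -- Both vectors have the same coordinate sum, so all weights may be shifted by that of the pivot
  -- coordinate `τ i`; afterwards the inequality holds term by term.
  have key : 0 ≤ ∑ k, (sliceVertex i (τ.symm k) - c k) * (w k - w (τ i)) := by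
    refine Finset.sum_nonneg fun k _ => ?_
    obtain ⟨j, rfl⟩ := τ.surjective k
    rw [Equiv.symm_apply_apply]
    rcases lt_trichotomy j i with h | rfl | h
    · rw [sliceVertex_of_lt h]
      exact mul_nonneg (sub_nonneg.2 (hc _).2) (sub_nonneg.2 (hτ h.le))
    · simp
    · rw [sliceVertex_of_gt h]
      exact mul_nonneg_of_nonpos_of_nonpos (sub_nonpos.2 (hc _).1) (sub_nonpos.2 (hτ h.le))
  have hv : ∑ k, sliceVertex i (τ.symm k) = ∑ k, c k := by
    rw [hs, ← sum_sliceVertex i]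
    exact Equiv.sum_comp τ.symm (sliceVertex i)
  have expand : ∑ k, (sliceVertex i (τ.symm k) - c k) * (w k - w (τ i)) =
      (∑ k, sliceVertex i (τ.symm k) * w k - ∑ k, c k * w k)
        - (∑ k, sliceVertex i (τ.symm k) - ∑ k, c k) * w (τ i) := by
    rw [← Finset.sum_sub_distrib, ← Finset.sum_sub_distrib, Finset.sum_mul,
      ← Finset.sum_sub_distrib]
    exact Finset.sum_congr rfl fun k _ => by ring
  rw [expand, hv] at key
  linarith

/-- The Minkowski sum `R_1 + ⋯ + R_n` of the hyperplane slices
`R_i = {x ∈ [0,1]^n : Σ x_k = i·n/(n+1)}` of the unit hypercube equals the convex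
hull of the set of coordinate permutations of the vector `z` with entries
`z_i = (n² + n − 1 − (i−1)(n+2))/(n+1)`. -/
theorem stmt5 (n : ℕ) (hn : 1 ≤ n) :
    {x : Fin n → ℝ | ∃ c : Fin n → Fin n → ℝ,
        (∀ i : Fin n, (∀ k, c i k ∈ Set.Icc (0 : ℝ) 1) ∧
          ∑ k, c i k = (((i : ℕ) : ℝ) + 1) * n / (n + 1)) ∧
        x = ∑ i, c i} =
      convexHull ℝ (Set.range fun σ : Equiv.Perm (Fin n) =>
        fun k : Fin n =>
          ((n : ℝ) ^ 2 + (n : ℝ) - 1 - (((σ k : Fin n) : ℕ) : ℝ) * ((n : ℝ) + 2)) /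
            ((n : ℝ) + 1)) := by
  apply Set.Subset.antisymm
  · rintro x ⟨c, hc, rfl⟩
    by_contra hx
    obtain ⟨f, u, hfu, hux⟩ := geometric_hahn_banach_closed_point (convex_convexHull ℝ _)
      ((Set.finite_range _).isClosed_convexHull (𝕜 := ℝ)) hx
    let w : Fin n → ℝ := fun k => f (Pi.single k 1)
    have hf : ∀ y : Fin n → ℝ, f y = ∑ k, y k * w k := fun y => by
      conv_lhs => rw [pi_eq_sum_univ' y]
      simp [w, Pi.single]
    let τ : Equiv.Perm (Fin n) := Tuple.sort (-w)
    have hτ : Antitone (w ∘ τ) := fun a b h => by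
      have := Tuple.monotone_sort (-w) h
      simpa using this
    have h1 := hfu _ (subset_convexHull ℝ _ ⟨τ.symm, rfl⟩)
    have h2 : f (∑ i, c i) ≤ ∑ i, ∑ k, sliceVertex i (τ.symm k) * w k := by
      rw [map_sum]
      exact Finset.sum_le_sum fun i _ => (hf (c i)).le.trans
        (slice_le w (c i) τ hτ i (hc i).1 (hc i).2)
    rw [hf] at h1
    rw [Finset.sum_comm] at h2
    simp only [← Finset.sum_mul, sum_sliceVertex_left] at h2
    linarith
  · refine convexHull_min ?_ ?_
    · rintro _ ⟨σ, rfl⟩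
      refine ⟨fun i k => sliceVertex i (σ k), fun i => ⟨fun k => sliceVertex_mem _ _, ?_⟩, ?_⟩
      · rw [← sum_sliceVertex i]
        exact Equiv.sum_comp σ (sliceVertex i)
      · funext k
        simp only [Finset.sum_apply, sum_sliceVertex_left]
    · rintro _ ⟨c, hc, rfl⟩ _ ⟨d, hd, rfl⟩ a b ha hb hab
      refine ⟨fun i => a • c i + b • d i, fun i => ⟨fun k => ?_, ?_⟩, ?_⟩
      · exact convex_Icc (0 : ℝ) 1 ((hc i).1 k) ((hd i).1 k) ha hb hab
      · simp only [Pi.add_apply, Pi.smul_apply, smul_eq_mul, Finset.sum_add_distrib,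
          ← Finset.mul_sum, (hc i).2, (hd i).2]
        rw [← add_mul, hab, one_mul]
      · rw [Finset.sum_add_distrib, Finset.smul_sum, Finset.smul_sum]
end

section
/- Let n ≥ 1 and let u ∈ ℝ^n be the vector with entries u_i = −(n² + n − 1 − (i−1)(n+2))/(n+1). For k = 1,…,n−1 let u^{(k)} ∈ ℝ^n denote the vector obtained from u by exchanging its k-th and (k+1)-st entries. Then the cone with apex u spanned by the rays u^{(k)} − u, namely C = {u + λ_1(u^{(1)} − u) + ⋯ + λ_{n−1}(u^{(n−1)} − u) : λ_1,…,λ_{n−1} ≥ 0}, equals the set of all a ∈ ℝ^n satisfying a_1 + ⋯ + a_n = −n²/2 and a_1 + ⋯ + a_k ≥ (k²(n+2) − k(2n²+3n))/(2(n+1)) for every k = 1,…,n−1. -/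
/-!
The linear map sending a vector to its partial sums `a_1 + ⋯ + a_m`, `m ≤ n`, is injective, and it
diagonalises the problem. Since consecutive entries of `u` differ by `d = (n + 2) / (n + 1) > 0`,
the ray `u^{(k)} - u` equals `d (e_k - e_{k+1})`, whose only nonzero partial sum is the `k`-th,
with value `d` (`prefixSum_ray`). Hence the `m`-th partial sum of a point of the cone is that of
`u`, plus `d λ_m` when `1 ≤ m ≤ n - 1` (`prefixSum_cone_succ`). The partial sums of `u` are the
right-hand sides of the inequalities (`prefixSum_uVec`), so the conditions `λ_m ≥ 0` are exactly
these inequalities, and the total sum is that of `u`, namely `-n²/2`.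
-/

/-- The vector `u ∈ ℝ^n` with entries `u_i = −(n² + n − 1 − (i−1)(n+2))/(n+1)`
(zero-indexed: `k` encodes the index `k+1` of the paper). -/
noncomputable def uVec (n : ℕ) : Fin n → ℝ :=
  fun k => -(((n : ℝ) ^ 2 + (n : ℝ) - 1 - ((k : ℕ) : ℝ) * ((n : ℝ) + 2)) / ((n : ℝ) + 1))

/-- The partial sum of the first `m` entries of `a`; it is the total sum as soon as `n ≤ m`. -/
def prefixSum {n : ℕ} (a : Fin n → ℝ) (m : ℕ) : ℝ :=
  ∑ i ∈ Finset.univ.filter (fun i : Fin n => (i : ℕ) < m), a i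

lemma prefixSum_zero {n : ℕ} (a : Fin n → ℝ) : prefixSum a 0 = 0 := by
  simp [prefixSum]

lemma prefixSum_succ {n : ℕ} (a : Fin n → ℝ) (i : Fin n) :
    prefixSum a (i + 1) = prefixSum a i + a i := by
  unfold prefixSum
  have h : Finset.univ.filter (fun j : Fin n => (j : ℕ) < i + 1) =
      insert i (Finset.univ.filter (fun j : Fin n => (j : ℕ) < i)) := by
    ext j
    simp only [Finset.mem_filter, Finset.mem_univ, true_and, Finset.mem_insert, Fin.ext_iff]
    omega
  rw [h, Finset.sum_insert (by simp), add_comm]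

lemma prefixSum_self {n : ℕ} (a : Fin n → ℝ) : prefixSum a n = ∑ i, a i := by
  simp [prefixSum]

lemma eq_of_prefixSum_eq {n : ℕ} {a b : Fin n → ℝ}
    (h : ∀ m ≤ n, prefixSum a m = prefixSum b m) : a = b := by
  funext i
  have h1 := h (i + 1) i.isLt
  rw [prefixSum_succ, prefixSum_succ, h i i.isLt.le] at h1
  exact add_left_cancel h1

lemma prefixSum_uVec (n m : ℕ) (hm : m ≤ n) :
    prefixSum (uVec n) m =
      ((m : ℝ) ^ 2 * ((n : ℝ) + 2) - (m : ℝ) * (2 * (n : ℝ) ^ 2 + 3 * (n : ℝ))) /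
        (2 * ((n : ℝ) + 1)) := by
  induction m with
  | zero => simp [prefixSum_zero]
  | succ m ih =>
    have h := prefixSum_succ (uVec n) ⟨m, hm⟩
    simp only at h
    rw [h, ih (by omega)]
    have hn : (n : ℝ) + 1 ≠ 0 := by positivity
    simp only [uVec]
    push_cast
    field_simp
    ring

/-- The generator `u^{(k)} - u` of the cone, where `k` is zero-indexed. -/
noncomputable def ray (n : ℕ) (k : Fin (n - 1)) : Fin n → ℝ :=
  (fun j => uVec n
      (Equiv.swap (Fin.castLE (by omega) k)
        (⟨(k : ℕ) + 1, by have := k.isLt; omega⟩ : Fin n) j)) - uVec n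

lemma ray_apply (n : ℕ) (k : Fin (n - 1)) (j : Fin n) :
    ray n k j = (if j = Fin.castLE (by omega) k then ((n : ℝ) + 2) / ((n : ℝ) + 1) else 0) -
      (if j = (⟨(k : ℕ) + 1, by have := k.isLt; omega⟩ : Fin n)
        then ((n : ℝ) + 2) / ((n : ℝ) + 1) else 0) := by
  have hn : (n : ℝ) + 1 ≠ 0 := by positivity
  simp only [ray, Pi.sub_apply, Equiv.swap_apply_def]
  split_ifs with h1 h2 h2
  · exfalso
    rw [h1] at h2
    simp [Fin.ext_iff] at h2
  · simp only [h1, uVec, Fin.val_castLE]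
    push_cast
    field_simp
    ring
  · simp only [h2, uVec, Fin.val_castLE]
    push_cast
    field_simp
    ring
  · simp

lemma prefixSum_ray (n : ℕ) (k : Fin (n - 1)) (m : ℕ) :
    prefixSum (ray n k) m = if m = k + 1 then ((n : ℝ) + 2) / ((n : ℝ) + 1) else 0 := by
  simp only [prefixSum, ray_apply, Finset.sum_sub_distrib, Finset.sum_ite_eq',
    Finset.mem_filter, Finset.mem_univ, true_and, Fin.val_castLE]
  split_ifs <;> first | omega | simp

lemma prefixSum_cone (n : ℕ) (lam : Fin (n - 1) → ℝ) (m : ℕ) :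
    prefixSum (uVec n + ∑ k, lam k • ray n k) m = prefixSum (uVec n) m +
      ∑ k : Fin (n - 1), lam k * prefixSum (ray n k) m := by
  simp only [prefixSum, Pi.add_apply, Finset.sum_apply, Pi.smul_apply, smul_eq_mul,
    Finset.sum_add_distrib, Finset.mul_sum]
  rw [Finset.sum_comm]

lemma prefixSum_cone_succ (n : ℕ) (lam : Fin (n - 1) → ℝ) (k : Fin (n - 1)) :
    prefixSum (uVec n + ∑ k, lam k • ray n k) (k + 1) = prefixSum (uVec n) (k + 1) +
      lam k * (((n : ℝ) + 2) / ((n : ℝ) + 1)) := by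
  rw [prefixSum_cone, Finset.sum_eq_single k]
  · simp [prefixSum_ray]
  · intro b _ hb
    have : ¬ (k : ℕ) + 1 = b + 1 := fun h => hb (Fin.ext (by omega))
    rw [prefixSum_ray, if_neg this, mul_zero]
  · simp

lemma prefixSum_cone_self (n : ℕ) (lam : Fin (n - 1) → ℝ) :
    prefixSum (uVec n + ∑ k, lam k • ray n k) n = -((n : ℝ) ^ 2) / 2 := by
  rw [prefixSum_cone, Finset.sum_eq_zero, prefixSum_uVec n n le_rfl]
  · have hn : (n : ℝ) + 1 ≠ 0 := by positivity
    field_simp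
    ring
  · intro k _
    have : n ≠ k + 1 := by have := k.isLt; omega
    simp [prefixSum_ray, this]

/-- The cone with apex `u` spanned by the rays `u^{(k)} − u`, where `u^{(k)}` is
obtained from `u` by exchanging its `k`-th and `(k+1)`-st entries (`k = 1,…,n−1`),
equals the set of `a ∈ ℝ^n` with `Σ a_i = −n²/2` and
`a_1 + ⋯ + a_k ≥ (k²(n+2) − k(2n²+3n))/(2(n+1))` for every `k = 1,…,n−1`. -/
theorem stmt6 (n : ℕ) (hn : 1 ≤ n) :
    {x : Fin n → ℝ | ∃ lam : Fin (n - 1) → ℝ, (∀ k, 0 ≤ lam k) ∧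
        x = uVec n + ∑ k : Fin (n - 1), lam k •
          ((fun j => uVec n
              (Equiv.swap (Fin.castLE (by omega) k)
                (⟨(k : ℕ) + 1, by have := k.isLt; omega⟩ : Fin n) j)) - uVec n)} =
      {a : Fin n → ℝ | (∑ i, a i) = -((n : ℝ) ^ 2) / 2 ∧
        ∀ k : ℕ, 1 ≤ k → k ≤ n - 1 →
          ((k : ℝ) ^ 2 * ((n : ℝ) + 2) - (k : ℝ) * (2 * (n : ℝ) ^ 2 + 3 * (n : ℝ))) /
              (2 * ((n : ℝ) + 1)) ≤
            ∑ i ∈ Finset.univ.filter (fun i : Fin n => (i : ℕ) < k), a i} := by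
  have hd : 0 < ((n : ℝ) + 2) / ((n : ℝ) + 1) := by positivity
  ext a
  simp only [Set.mem_ofPred_eq]
  constructor
  · rintro ⟨lam, hlam, hx⟩
    change a = uVec n + ∑ k, lam k • ray n k at hx
    refine ⟨?_, fun k hk1 hk2 => ?_⟩
    · rw [← prefixSum_self, hx, prefixSum_cone_self]
    · change _ ≤ prefixSum a k
      obtain ⟨k, rfl⟩ := Nat.exists_eq_add_of_le' hk1
      have h := prefixSum_cone_succ n lam ⟨k, hk2⟩
      simp only at h
      rw [← prefixSum_uVec n (k + 1) (by omega), hx, h]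
      exact le_add_of_nonneg_right (mul_nonneg (hlam _) hd.le)
  · rintro ⟨hsum, hineq⟩
    refine ⟨fun k => (prefixSum a (k + 1) - prefixSum (uVec n) (k + 1)) /
      (((n : ℝ) + 2) / ((n : ℝ) + 1)), fun k => ?_, ?_⟩
    · have h := hineq (k + 1) (by omega) k.isLt
      rw [← prefixSum_uVec n (k + 1) (by omega)] at h
      exact div_nonneg (sub_nonneg.2 h) hd.le
    · change a = uVec n + ∑ k, _ • ray n k
      refine eq_of_prefixSum_eq fun m hm => ?_
      rcases Nat.eq_zero_or_pos m with rfl | hpos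
      · rw [prefixSum_zero, prefixSum_zero]
      rcases hm.eq_or_lt with rfl | hlt
      · rw [prefixSum_cone_self, prefixSum_self, hsum]
      · obtain ⟨k, rfl⟩ := Nat.exists_eq_add_of_le' hpos
        have h := prefixSum_cone_succ n (fun k => (prefixSum a (k + 1) -
          prefixSum (uVec n) (k + 1)) / (((n : ℝ) + 2) / ((n : ℝ) + 1))) ⟨k, by omega⟩
        simp only at h
        rw [h, div_mul_cancel₀ _ hd.ne']
        ring
end

section
/- Let n ≥ 1 and let u ∈ ℝ^n have entries u_i = −(n² + n − 1 − (i−1)(n+2))/(n+1). Fix A ⊆ {1,…,n} (possibly empty) and an integer j with 0 ≤ j ≤ n, and for σ ∈ 𝔖_n set E(σ) = Σ_{i∈A} u_{σ(i)} + j(j+1)n/(2(n+1)) + (n−j)·#A. Then E(σ) ≥ 0 for every σ ∈ 𝔖_n, and there exists σ ∈ 𝔖_n with E(σ) = 0 if and only if j = #A. -/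
lemma two_mul_sum_range_int (a : ℕ) :
    2 * ∑ k ∈ Finset.range a, (k : ℤ) = (a : ℤ) * ((a : ℤ) - 1) := by
  induction a with
  | zero => simp
  | succ a ih => rw [Finset.sum_range_succ, mul_add, ih]; push_cast; ring

lemma card_mul_le_two_mul_sum {n : ℕ} (A : Finset (Fin n)) (σ : Equiv.Perm (Fin n)) :
    (A.card : ℤ) * ((A.card : ℤ) - 1) ≤ 2 * ∑ i ∈ A, ((σ i : ℕ) : ℤ) := by
  have hinj : Function.Injective (fun i : Fin n => ((σ i : ℕ) : ℤ)) := fun x y h =>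
    σ.injective (Fin.ext (Int.ofNat_inj.mp h))
  have h := Finset.sum_range_le_sum (s := A.image (fun i : Fin n => ((σ i : ℕ) : ℤ))) (c := 0)
    (by simp)
  rw [Finset.card_image_of_injective _ hinj, Finset.sum_image hinj.injOn] at h
  simp only [zero_add] at h
  linarith [two_mul_sum_range_int A.card]

lemma exists_perm_two_mul_sum_eq {n : ℕ} (A : Finset (Fin n)) :
    ∃ σ : Equiv.Perm (Fin n),
      2 * ∑ i ∈ A, ((σ i : ℕ) : ℤ) = (A.card : ℤ) * ((A.card : ℤ) - 1) := by
  have hle : A.card ≤ n := by simpa using A.card_le_univ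
  obtain ⟨σ, hσ⟩ := Equiv.Perm.exists_extending_pair (A.orderEmbOfFin rfl) (Fin.castLE hle)
    (A.orderEmbOfFin rfl).injective (Fin.castLE_injective hle)
  refine ⟨σ, ?_⟩
  have h : ∑ i ∈ A, ((σ i : ℕ) : ℤ) = ∑ k : Fin A.card, ((k : ℕ) : ℤ) := by
    conv_lhs => rw [← A.image_orderEmbOfFin_univ rfl]
    rw [Finset.sum_image (A.orderEmbOfFin rfl).injective.injOn]
    refine Finset.sum_congr rfl fun k _ => ?_
    rw [hσ k, Fin.val_castLE]
  rw [h, Fin.sum_univ_eq_sum_range (fun k => (k : ℤ)), two_mul_sum_range_int]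

lemma defect_pos {n a j : ℤ} (hj : 0 ≤ j) (hjn : j ≤ n) (hne : j ≠ a) :
    0 < (a - j) * (n * (a - j - 1) + 2 * a) := by
  rcases lt_or_gt_of_ne hne with h | h
  · exact mul_pos (by linarith)
      (by linarith [mul_nonneg (hj.trans hjn) (show 0 ≤ a - j - 1 by linarith)])
    -- Now `a - j - 1 ≤ -2`, so the second factor is at most `2 (a - n) < 0`.
  · refine mul_pos_of_neg_of_neg (by linarith) ?_
    linarith [mul_nonneg (hj.trans hjn) (show 0 ≤ j - a - 1 by linarith)]

/-- The pairing with denominators cleared, split into the excess of `Σ σ(i)` over its minimum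
`#A(#A-1)/2` and a term depending only on `n`, `#A` and `j`. -/
lemma two_mul_pairing_eq (n : ℕ) (A : Finset (Fin n)) (j : ℕ) (σ : Equiv.Perm (Fin n)) :
    2 * ((n : ℝ) + 1) * ((∑ i ∈ A, uVec n (σ i)) +
        (j : ℝ) * ((j : ℝ) + 1) * (n : ℝ) / (2 * ((n : ℝ) + 1)) +
        ((n : ℝ) - (j : ℝ)) * (A.card : ℝ)) =
      ((((n : ℤ) + 2) * (2 * ∑ i ∈ A, ((σ i : ℕ) : ℤ) - (A.card : ℤ) * ((A.card : ℤ) - 1)) +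
        ((A.card : ℤ) - j) * (n * ((A.card : ℤ) - j - 1) + 2 * A.card) : ℤ) : ℝ) := by
  have hn : (n : ℝ) + 1 ≠ 0 := by positivity
  have hu : ∑ i ∈ A, uVec n (σ i) =
      ((∑ i ∈ A, ((σ i : ℕ) : ℝ)) * ((n : ℝ) + 2) -
        A.card * ((n : ℝ) ^ 2 + n - 1)) / ((n : ℝ) + 1) := by
    simp only [uVec, Finset.sum_neg_distrib, ← Finset.sum_div, Finset.sum_sub_distrib,
      Finset.sum_const, nsmul_eq_mul, ← Finset.sum_mul]
    ring
  rw [hu]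
  push_cast
  field_simp
  ring

/-- For `A ⊆ {1,…,n}` and `0 ≤ j ≤ n`, the quantity
`E(σ) = Σ_{i∈A} u_{σ(i)} + j(j+1)n/(2(n+1)) + (n−j)·#A` is nonnegative for every
permutation `σ`, and it vanishes for some `σ` if and only if `j = #A`. -/
theorem stmt7 (n : ℕ) (hn : 1 ≤ n) (A : Finset (Fin n)) (j : ℕ) (hj : j ≤ n) :
    (∀ σ : Equiv.Perm (Fin n),
        0 ≤ (∑ i ∈ A, uVec n (σ i)) +
            (j : ℝ) * ((j : ℝ) + 1) * (n : ℝ) / (2 * ((n : ℝ) + 1)) +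
            ((n : ℝ) - (j : ℝ)) * (A.card : ℝ)) ∧
      ((∃ σ : Equiv.Perm (Fin n),
          (∑ i ∈ A, uVec n (σ i)) +
              (j : ℝ) * ((j : ℝ) + 1) * (n : ℝ) / (2 * ((n : ℝ) + 1)) +
              ((n : ℝ) - (j : ℝ)) * (A.card : ℝ) = 0) ↔ j = A.card) := by
  have hpos : (0 : ℝ) < 2 * ((n : ℝ) + 1) := by positivity
  have hjn : (j : ℤ) ≤ n := by exact_mod_cast hj
  refine ⟨fun σ => ?_, ?_, ?_⟩
  · refine nonneg_of_mul_nonneg_right ?_ hpos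
    rw [two_mul_pairing_eq]
    have h1 := card_mul_le_two_mul_sum A σ
    have h2 : 0 ≤ ((A.card : ℤ) - j) * (n * ((A.card : ℤ) - j - 1) + 2 * A.card) := by
      by_cases h : (j : ℤ) = A.card
      · simp [h]
      · exact (defect_pos (by positivity) hjn h).le
    exact_mod_cast add_nonneg (mul_nonneg (by positivity) (sub_nonneg.mpr h1)) h2
  · rintro ⟨σ, h0⟩
    by_contra hne
    have h := two_mul_pairing_eq n A j σ
    rw [h0, mul_zero] at h
    have h' := (Int.cast_eq_zero (α := ℝ)).mp h.symm
    have h1 := mul_nonneg (show (0 : ℤ) ≤ (n : ℤ) + 2 by positivity)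
      (sub_nonneg.mpr (card_mul_le_two_mul_sum A σ))
    have h2 := defect_pos (a := A.card) (by positivity) hjn
      (by exact_mod_cast hne)
    linarith
  · intro hjA
    obtain ⟨σ, hσ⟩ := exists_perm_two_mul_sum_eq A
    refine ⟨σ, (mul_eq_zero.mp ?_).resolve_left hpos.ne'⟩
    rw [two_mul_pairing_eq, hσ, hjA]
    simp
end

section
/- Let n ≥ 1 and let u ∈ ℝ^n have entries u_i = −(n² + n − 1 − (i−1)(n+2))/(n+1). Then for all integers k, j with 0 ≤ k ≤ n and 0 ≤ j ≤ n, the following identity holds: Σ_{i=1}^{k} u_i + j(j+1)n/(2(n+1)) + k(n−j) = (j−k)((j−k)n + n − 2k)/(2(n+1)). Moreover, since the entries u_1 ≤ u_2 ≤ ⋯ ≤ u_n are increasing, the left-hand side is the minimum over all σ ∈ 𝔖_n and all A ⊆ {1,…,n} with #A = k of Σ_{i∈A} u_{σ(i)} + j(j+1)n/(2(n+1)) + k(n−j). -/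
theorem sum_fin_filter_lt {n k : ℕ} (hk : k ≤ n) (f : ℕ → ℝ) :
    ∑ i ∈ Finset.univ.filter (fun i : Fin n => (i : ℕ) < k), f i =
      ∑ i ∈ Finset.range k, f i := by
  rw [Finset.sum_filter, Fin.sum_univ_eq_sum_range (fun i => if i < k then f i else 0) n,
    ← Finset.sum_filter]
  congr 1
  ext i
  simp only [Finset.mem_filter, Finset.mem_range]
  omega

theorem card_fin_filter_lt {n k : ℕ} (hk : k ≤ n) :
    (Finset.univ.filter (fun i : Fin n => (i : ℕ) < k)).card = k := by
  have h := sum_fin_filter_lt hk (fun _ => 1)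
  simp only [Finset.sum_const, Finset.card_range, nsmul_eq_mul, mul_one] at h
  exact_mod_cast h

/-- Among the `k`-element subsets of `Fin n`, the initial segment minimizes the sum of a monotone
sequence. The sequence is defined on all of `ℕ` so that the threshold `f k` makes sense
for `k = n`. -/
theorem sum_initial_le {n k : ℕ} (hk : k ≤ n) {f : ℕ → ℝ} (hf : Monotone f)
    (B : Finset (Fin n)) (hB : B.card = k) :
    ∑ i ∈ Finset.univ.filter (fun i : Fin n => (i : ℕ) < k), f i ≤ ∑ i ∈ B, f i := by
  have h : ∑ i ∈ Finset.univ.filter (fun i : Fin n => (i : ℕ) < k), (f i - f k) ≤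
      ∑ i ∈ B, (f i - f k) := by
    rw [Finset.sum_filter, ← Finset.sum_ite_mem_eq B]
    refine Finset.sum_le_sum fun i _ => ?_
    rcases lt_or_ge (i : ℕ) k with hi | hi
    · have := hf hi.le
      split_ifs <;> linarith
    · have := hf hi
      rw [if_neg (not_lt.mpr hi)]
      split_ifs <;> linarith
  simp only [Finset.sum_sub_distrib, Finset.sum_const, hB, card_fin_filter_lt hk] at h
  linarith

/-- The affine formula for the entries of `uVec n`, extended to all natural indices. -/
noncomputable def uSeq (n : ℕ) (i : ℕ) : ℝ :=
  -(((n : ℝ) ^ 2 + (n : ℝ) - 1 - (i : ℝ) * ((n : ℝ) + 2)) / ((n : ℝ) + 1))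

theorem uSeq_monotone (n : ℕ) : Monotone (uSeq n) := by
  intro a b hab
  have hab' : (a : ℝ) ≤ b := by exact_mod_cast hab
  unfold uSeq
  gcongr

theorem sum_range_uSeq (n k : ℕ) :
    ∑ i ∈ Finset.range k, uSeq n i =
      -((k : ℝ) * ((n : ℝ) ^ 2 + n - 1) - (k : ℝ) * ((k : ℝ) - 1) / 2 * ((n : ℝ) + 2)) /
        ((n : ℝ) + 1) := by
  have hn : (n : ℝ) + 1 ≠ 0 := by positivity
  induction k with
  | zero => simp
  | succ k ih =>
    rw [Finset.sum_range_succ, ih, uSeq]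
    push_cast
    field_simp
    ring

/-- For `0 ≤ k, j ≤ n` one has
`Σ_{i=1}^{k} u_i + j(j+1)n/(2(n+1)) + k(n−j) = (j−k)((j−k)n + n − 2k)/(2(n+1))`;
moreover this quantity is the minimum, over all permutations `σ` and all subsets `A`
of cardinality `k`, of `Σ_{i∈A} u_{σ(i)} + j(j+1)n/(2(n+1)) + k(n−j)`. -/
theorem stmt8 (n k j : ℕ) (hn : 1 ≤ n) (hk : k ≤ n) (hj : j ≤ n) :
    ((∑ i ∈ Finset.univ.filter (fun i : Fin n => (i : ℕ) < k), uVec n i) +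
          (j : ℝ) * ((j : ℝ) + 1) * (n : ℝ) / (2 * ((n : ℝ) + 1)) +
          (k : ℝ) * ((n : ℝ) - (j : ℝ)) =
        ((j : ℝ) - (k : ℝ)) * (((j : ℝ) - (k : ℝ)) * (n : ℝ) + (n : ℝ) - 2 * (k : ℝ)) /
          (2 * ((n : ℝ) + 1))) ∧
      IsLeast
        {x : ℝ | ∃ σ : Equiv.Perm (Fin n), ∃ A : Finset (Fin n), A.card = k ∧
          x = (∑ i ∈ A, uVec n (σ i)) +
              (j : ℝ) * ((j : ℝ) + 1) * (n : ℝ) / (2 * ((n : ℝ) + 1)) +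
              (k : ℝ) * ((n : ℝ) - (j : ℝ))}
        ((∑ i ∈ Finset.univ.filter (fun i : Fin n => (i : ℕ) < k), uVec n i) +
          (j : ℝ) * ((j : ℝ) + 1) * (n : ℝ) / (2 * ((n : ℝ) + 1)) +
          (k : ℝ) * ((n : ℝ) - (j : ℝ))) := by
  have hu : ∀ i : Fin n, uVec n i = uSeq n i := fun _ => rfl
  simp only [hu]
  refine ⟨?_, ?_, ?_⟩
  · have hn : (n : ℝ) + 1 ≠ 0 := by positivity
    rw [sum_fin_filter_lt hk, sum_range_uSeq]
    field_simp
    ring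
  · exact ⟨1, _, card_fin_filter_lt hk, rfl⟩
  · rintro x ⟨σ, A, hA, rfl⟩
    have h := sum_initial_le hk (uSeq_monotone n) (A.map σ.toEmbedding)
      (by rw [Finset.card_map, hA])
    rw [Finset.sum_map] at h
    simp only [Equiv.coe_toEmbedding] at h
    linarith
end

section
/- Let n ≥ 2. In ℝ^{n+1}, the convex cone generated by the union of the two finite sets S₁ = {e_1} ∪ {e_1 − e_i : i = 2,…,n} ∪ {e_{n+1}} ∪ {e_i + e_{n+1} : i = 2,…,n} and S₂ = {e_{k+1} − e_{k+2} : k = 1,…,n−2} ∪ {e_n} equals the convex cone generated by {e_k − e_{k+1} : k = 1,…,n−1} ∪ {e_n, e_{n+1}}. -/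
/-- The generators `S₁ ∪ S₂` in `ℝ^{n+1}`:
`S₁ = {e_1} ∪ {e_1 − e_i : i = 2,…,n} ∪ {e_{n+1}} ∪ {e_i + e_{n+1} : i = 2,…,n}` and
`S₂ = {e_{k+1} − e_{k+2} : k = 1,…,n−2} ∪ {e_n}`. -/
def gens13 (n : ℕ) :
    (Unit ⊕ Fin (n - 1)) ⊕ (Unit ⊕ Fin (n - 1)) ⊕ (Fin (n - 2) ⊕ Unit) →
      Fin (n + 1) → ℝ
  | Sum.inl (Sum.inl _) => fun i => if (i : ℕ) = 0 then 1 else 0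
  | Sum.inl (Sum.inr m) => fun i =>
      if (i : ℕ) = 0 then 1 else if (i : ℕ) = (m : ℕ) + 1 then -1 else 0
  | Sum.inr (Sum.inl (Sum.inl _)) => fun i => if (i : ℕ) = n then 1 else 0
  | Sum.inr (Sum.inl (Sum.inr m)) => fun i =>
      if (i : ℕ) = (m : ℕ) + 1 then 1 else if (i : ℕ) = n then 1 else 0
  | Sum.inr (Sum.inr (Sum.inl k)) => fun i =>
      if (i : ℕ) = (k : ℕ) + 1 then 1 else if (i : ℕ) = (k : ℕ) + 2 then -1 else 0
  | Sum.inr (Sum.inr (Sum.inr _)) => fun i => if (i : ℕ) = n - 1 then 1 else 0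

lemma mem_coneGen_self {E ι : Type*} [AddCommMonoid E] [Module ℝ E] [Fintype ι]
    (v : ι → E) (i : ι) : v i ∈ coneGen v := by
  classical
  refine ⟨Pi.single i 1, fun j => ?_, ?_⟩
  · by_cases h : j = i
    · subst h; simp
    · simp [h]
  · simp [Pi.single_apply, ite_smul]

lemma add_mem_coneGen {E ι : Type*} [AddCommMonoid E] [Module ℝ E] [Fintype ι]
    {v : ι → E} {x y : E} (hx : x ∈ coneGen v) (hy : y ∈ coneGen v) : x + y ∈ coneGen v := by
  obtain ⟨c, hc, rfl⟩ := hx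
  obtain ⟨d, hd, rfl⟩ := hy
  exact ⟨fun i => c i + d i, fun i => add_nonneg (hc i) (hd i), by
    simp [add_smul, Finset.sum_add_distrib]⟩

lemma coneGen_subset {E ι κ : Type*} [AddCommMonoid E] [Module ℝ E] [Fintype ι] [Fintype κ]
    {v : ι → E} {w : κ → E} (h : ∀ i, v i ∈ coneGen w) : coneGen v ⊆ coneGen w := by
  rintro x ⟨c, hc, rfl⟩
  choose d hd hv using h
  refine ⟨fun j => ∑ i, c i * d i j,
    fun j => Finset.sum_nonneg fun i _ => mul_nonneg (hc i) (hd i j), ?_⟩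
  simp_rw [Finset.sum_smul]
  rw [Finset.sum_comm]
  refine Finset.sum_congr rfl fun i _ => ?_
  conv_lhs => rw [hv i]
  simp [Finset.smul_sum, mul_smul]

/-- The standard basis vector of `ℝ^{n+1}` with zero-based index `k`, where `k` is a natural number;
it is zero when `k > n`. -/
def stdVec (n k : ℕ) : Fin (n + 1) → ℝ := fun i => if (i : ℕ) = k then 1 else 0

/-- Telescoping the consecutive differences `e k - e (k + 1)` down to index `0`. -/
lemma stdVec_zero_sub_mem {n : ℕ} {C : Set (Fin (n + 1) → ℝ)}
    (hadd : ∀ x ∈ C, ∀ y ∈ C, x + y ∈ C)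
    (hd : ∀ k, k + 1 < n → stdVec n k - stdVec n (k + 1) ∈ C) (m : ℕ) (hm : m + 1 < n) :
    stdVec n 0 - stdVec n (m + 1) ∈ C := by
  induction m with
  | zero => exact hd 0 hm
  | succ m ih => simpa using hadd _ (ih (by omega)) _ (hd (m + 1) hm)

/-- Telescoping the consecutive differences `e k - e (k + 1)` up to the last vector `e (n - 1)`. -/
lemma stdVec_mem {n : ℕ} {C : Set (Fin (n + 1) → ℝ)}
    (hadd : ∀ x ∈ C, ∀ y ∈ C, x + y ∈ C)
    (hd : ∀ k, k + 1 < n → stdVec n k - stdVec n (k + 1) ∈ C)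
    (hl : stdVec n (n - 1) ∈ C) (k : ℕ) (hk : k ≤ n - 1) : stdVec n k ∈ C := by
  induction hk using Nat.decreasingInduction with
  | self => exact hl
  | of_succ k hk ih => simpa using hadd _ (hd k (by omega)) _ ih

/-- In `ℝ^{n+1}`, the cone generated by `S₁ ∪ S₂` equals the cone generated by
`{e_k − e_{k+1} : k = 1,…,n−1} ∪ {e_n, e_{n+1}}`. -/
theorem stmt13 (n : ℕ) (hn : 2 ≤ n) :
    coneGen (gens13 n) =
      coneGen (fun q : Fin (n - 1) ⊕ Bool => fun i : Fin (n + 1) =>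
        match q with
        | Sum.inl k => if (i : ℕ) = (k : ℕ) then (1 : ℝ)
            else if (i : ℕ) = (k : ℕ) + 1 then -1 else 0
        | Sum.inr b =>
            if b then (if (i : ℕ) = n then 1 else 0)
            else (if (i : ℕ) = n - 1 then 1 else 0)) := by
  apply Set.Subset.antisymm
  · apply coneGen_subset
    set w := (fun q : Fin (n - 1) ⊕ Bool => fun i : Fin (n + 1) =>
        match q with
        | Sum.inl k => if (i : ℕ) = (k : ℕ) then (1 : ℝ)
            else if (i : ℕ) = (k : ℕ) + 1 then -1 else 0
        | Sum.inr b =>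
            if b then (if (i : ℕ) = n then 1 else 0)
            else (if (i : ℕ) = n - 1 then 1 else 0)) with hw
    have hadd : ∀ x ∈ coneGen w, ∀ y ∈ coneGen w, x + y ∈ coneGen w :=
      fun x hx y hy => add_mem_coneGen hx hy
    have hd : ∀ k, k + 1 < n → stdVec n k - stdVec n (k + 1) ∈ coneGen w := by
      intro k hk
      convert mem_coneGen_self w (Sum.inl ⟨k, by omega⟩) using 1
      funext i
      simp only [hw, stdVec, Pi.sub_apply]
      split_ifs <;> first | omega | norm_num
    have hl : stdVec n (n - 1) ∈ coneGen w := by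
      convert mem_coneGen_self w (Sum.inr false) using 1
      funext i
      simp [hw, stdVec]
    have hn' : stdVec n n ∈ coneGen w := by
      convert mem_coneGen_self w (Sum.inr true) using 1
      funext i
      simp [hw, stdVec]
    rintro ((_ | m) | (_ | m) | k | _)
    · exact stdVec_mem hadd hd hl 0 (by omega)
    · convert stdVec_zero_sub_mem hadd hd m (by omega) using 1
      funext i
      simp only [gens13, stdVec, Pi.sub_apply]
      split_ifs <;> first | omega | norm_num
    · exact hn'
    · convert hadd _ (stdVec_mem hadd hd hl (m + 1) (by omega)) _ hn' using 1
      funext i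
      simp only [gens13, stdVec, Pi.add_apply]
      split_ifs <;> first | omega | norm_num
    · convert hd (k + 1) (by omega) using 1
      funext i
      simp only [gens13, stdVec, Pi.sub_apply]
      split_ifs <;> first | omega | norm_num
    · exact hl
  · apply coneGen_subset
    rintro (⟨_ | k, hk⟩ | _ | _)
    · exact mem_coneGen_self (gens13 n) (Sum.inl (Sum.inr ⟨0, hk⟩))
    · exact mem_coneGen_self (gens13 n) (Sum.inr (Sum.inr (Sum.inl ⟨k, by omega⟩)))
    · exact mem_coneGen_self (gens13 n) (Sum.inr (Sum.inr (Sum.inr ())))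
    · exact mem_coneGen_self (gens13 n) (Sum.inr (Sum.inl (Sum.inl ())))
end

section
/- Let n ≥ 1. Let σ ⊆ ℝ^n × ℝ^{n+1} be the convex cone generated by the 2n+1 vectors (e_1 + ⋯ + e_{j−1}, e_j) and (e_1 + ⋯ + e_j, e_j) for j = 1,…,n (where the empty sum is 0), together with (e_1 + ⋯ + e_n, e_{n+1}). Let π : ℝ^n × ℝ^{n+1} → ℝ^{n+1} be the linear map π(a,b) = (b_1 + ⋯ + b_{n+1} − a_n, a_1 − a_n, a_2 − a_n, …, a_{n−1} − a_n, a_n). Then π(σ) equals the convex cone δ^(n) ⊆ ℝ^{n+1} generated by the vectors e_1 + ⋯ + e_j for j = 1,…,n together with e_{n+1}. -/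
/-- The `2n+1` generators of the cone `σ_{1⋯n} ⊆ ℝ^n × ℝ^{n+1}`:
`(e_1 + ⋯ + e_{j−1}, e_j)` and `(e_1 + ⋯ + e_j, e_j)` for `j = 1,…,n`, together
with `(e_1 + ⋯ + e_n, e_{n+1})`. -/
def sigmaGens (n : ℕ) : Fin n ⊕ Fin n ⊕ Unit → (Fin n → ℝ) × (Fin (n + 1) → ℝ)
  | Sum.inl j => (fun i => if (i : ℕ) < (j : ℕ) then 1 else 0,
      fun i => if (i : ℕ) = (j : ℕ) then 1 else 0)
  | Sum.inr (Sum.inl j) => (fun i => if (i : ℕ) ≤ (j : ℕ) then 1 else 0,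
      fun i => if (i : ℕ) = (j : ℕ) then 1 else 0)
  | Sum.inr (Sum.inr _) => (fun _ => 1, fun i => if (i : ℕ) = n then 1 else 0)

/-- The generators of the cone `δ^(n) ⊆ ℝ^{n+1}`:
`e_1 + ⋯ + e_j` for `j = 1,…,n` together with `e_{n+1}`. -/
def deltaGens (n : ℕ) : Fin n ⊕ Unit → Fin (n + 1) → ℝ
  | Sum.inl j => fun i => if (i : ℕ) ≤ (j : ℕ) then 1 else 0
  | Sum.inr _ => fun i => if (i : ℕ) = n then 1 else 0

open scoped NNReal in
theorem coneGen_eq_span {E : Type*} [AddCommGroup E] [Module ℝ E] {ι : Type*} [Fintype ι]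
    (v : ι → E) : coneGen v = (Submodule.span ℝ≥0 (Set.range v) : Set E) := by
  ext x
  rw [SetLike.mem_coe, Submodule.mem_span_range_iff_exists_fun]
  constructor
  · rintro ⟨c, hc, rfl⟩
    exact ⟨fun i => ⟨c i, hc i⟩, rfl⟩
  · rintro ⟨c, rfl⟩
    exact ⟨fun i => c i, fun i => (c i).2, rfl⟩

open scoped NNReal in
/-- If a linear map matches two generating families along a surjection of their index sets,
it maps the first cone onto the second. -/
theorem image_coneGen {E F : Type*} [AddCommGroup E] [Module ℝ E] [AddCommGroup F] [Module ℝ F]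
    {ι κ : Type*} [Fintype ι] [Fintype κ] (L : E →ₗ[ℝ] F) (v : ι → E) (w : κ → F) (f : ι → κ)
    (hf : Function.Surjective f) (h : ∀ i, L (v i) = w (f i)) :
    L '' coneGen v = coneGen w := by
  rw [coneGen_eq_span, coneGen_eq_span, ← hf.range_comp w]
  have hr : Set.range (w ∘ f) = (L.restrictScalars ℝ≥0) '' Set.range v := by
    rw [← Set.range_comp]
    exact congrArg Set.range (funext fun i => (h i).symm)
  rw [hr, ← Submodule.map_span]
  rfl

/-- The linear map `π(a,b) = (Σ_j b_j − a_n, a_1 − a_n, …, a_{n−1} − a_n, a_n)`.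
The index bounds it needs, both consequences of `1 ≤ n`, are taken as hypotheses. -/
noncomputable def piMap (n : ℕ) (hlast : n - 1 < n)
    (hprev : ∀ i : Fin (n + 1), (i : ℕ) - 1 < n) :
    ((Fin n → ℝ) × (Fin (n + 1) → ℝ)) →ₗ[ℝ] (Fin (n + 1) → ℝ) where
  toFun p := fun i : Fin (n + 1) =>
        if (i : ℕ) = 0 then (∑ j, p.2 j) - p.1 ⟨n - 1, hlast⟩
        else if (i : ℕ) = n then p.1 ⟨n - 1, hlast⟩
        else p.1 ⟨(i : ℕ) - 1, hprev i⟩ - p.1 ⟨n - 1, hlast⟩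
  map_add' p q := by
    funext i
    simp only [Prod.fst_add, Prod.snd_add, Pi.add_apply, Finset.sum_add_distrib]
    split_ifs <;> ring
  map_smul' c p := by
    funext i
    simp only [Prod.smul_fst, Prod.smul_snd, Pi.smul_apply, smul_eq_mul, ← Finset.mul_sum,
      RingHom.id_apply]
    split_ifs <;> ring

/-- The index of the generator of `δ^(n)` to which `π` sends a given generator of `σ`. -/
def genMap (n : ℕ) : Fin n ⊕ Fin n ⊕ Unit → Fin n ⊕ Unit
  | Sum.inl j => Sum.inl j
  | Sum.inr (Sum.inl j) => if h : (j : ℕ) + 1 < n then Sum.inl ⟨j + 1, h⟩ else Sum.inr ()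
  | Sum.inr (Sum.inr _) => Sum.inr ()

theorem genMap_surjective (n : ℕ) : Function.Surjective (genMap n)
  | Sum.inl j => ⟨Sum.inl j, rfl⟩
  | Sum.inr _ => ⟨Sum.inr (Sum.inr ()), rfl⟩

/-- The entries of a standard basis vector of `ℝ^{n+1}` add up to `1`. -/
theorem sum_ite_val_eq (n k : ℕ) (hk : k < n + 1) :
    ∑ i : Fin (n + 1), (if (i : ℕ) = k then (1 : ℝ) else 0) = 1 := by
  rw [Finset.sum_eq_single (⟨k, hk⟩ : Fin (n + 1))]
  · simp
  · intro b _ hb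
    exact if_neg fun h => hb (Fin.ext h)
  · simp

theorem piMap_sigmaGens (n : ℕ) (hlast : n - 1 < n)
    (hprev : ∀ i : Fin (n + 1), (i : ℕ) - 1 < n)
    (x : Fin n ⊕ Fin n ⊕ Unit) :
    piMap n hlast hprev (sigmaGens n x) = deltaGens n (genMap n x) := by
  funext i
  have hi := i.isLt
  rcases x with j | j | u
  · have hj := j.isLt
    simp only [piMap, LinearMap.coe_mk, AddHom.coe_mk, sigmaGens, deltaGens, genMap,
      sum_ite_val_eq n j (by omega)]
    split_ifs <;> first | omega | norm_num
  · have hj := j.isLt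
    simp only [piMap, LinearMap.coe_mk, AddHom.coe_mk, sigmaGens, genMap,
      sum_ite_val_eq n j (by omega)]
    by_cases h : (j : ℕ) + 1 < n
    · simp only [h, dite_true, deltaGens]
      split_ifs <;> first | omega | norm_num
    · simp only [h, dite_false, deltaGens]
      split_ifs <;> first | omega | norm_num
  · simp only [piMap, LinearMap.coe_mk, AddHom.coe_mk, sigmaGens, deltaGens, genMap,
      sum_ite_val_eq n n (by omega)]
    split_ifs <;> first | omega | norm_num

/-- The image of the cone `σ_{1⋯n}` under the linear map
`π(a,b) = (Σ_j b_j − a_n, a_1 − a_n, …, a_{n−1} − a_n, a_n)` equals `δ^(n)`. -/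
theorem stmt14 (n : ℕ) (hn : 1 ≤ n) :
    (fun p : (Fin n → ℝ) × (Fin (n + 1) → ℝ) => fun i : Fin (n + 1) =>
        if (i : ℕ) = 0 then (∑ j, p.2 j) - p.1 ⟨n - 1, by omega⟩
        else if (i : ℕ) = n then p.1 ⟨n - 1, by omega⟩
        else p.1 ⟨(i : ℕ) - 1, by have := i.isLt; omega⟩ - p.1 ⟨n - 1, by omega⟩) ''
      coneGen (sigmaGens n) =
    coneGen (deltaGens n) := by
  have hprev : ∀ i : Fin (n + 1), (i : ℕ) - 1 < n := fun i => by omega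
  exact image_coneGen (piMap n (by omega) hprev) _ _ (genMap n) (genMap_surjective n)
    (piMap_sigmaGens n (by omega) hprev)
end
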